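/- Let D be a dense subset of Ω and let (φ_l, φ_u) be a pair of real functions on D, locally bounded relative to Ω, which is H-continuous as a pair on D (with D as the underlying domain). Then there exists a unique H-continuous pair (u, v) on Ω such that u(x) = φ_l(x) and v(x) = φ_u(x) for all x ∈ D; namely, u = I(D,Ω,φ_l) and v = S(D,Ω,φ_u). -/

import Mathlib

open Set

/-- Points of `ℝⁿ`. -/
abbrev Pt (n : ℕ) := EuclideanSpace ℝ (Fin n)

/-- Lower Baire operator `I(D,Ω,f)(x) = sup_{δ>0} inf { f y : y ∈ B_δ(x) ∩ D }`,
where `B_δ(x) = { y ∈ Ω : ‖y - x‖ < δ }`. -/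
noncomputable def Ilow {n : ℕ} (D Om : Set (Pt n)) (f : Pt n → ℝ) (x : Pt n) : ℝ :=
  sSup {a : ℝ | ∃ δ : ℝ, 0 < δ ∧
    a = sInf (f '' {y | y ∈ Om ∧ ‖y - x‖ < δ ∧ y ∈ D})}

/-- Upper Baire operator `S(D,Ω,f)(x) = inf_{δ>0} sup { f y : y ∈ B_δ(x) ∩ D }`. -/
noncomputable def Shigh {n : ℕ} (D Om : Set (Pt n)) (f : Pt n → ℝ) (x : Pt n) : ℝ :=
  sInf {a : ℝ | ∃ δ : ℝ, 0 < δ ∧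
    a = sSup (f '' {y | y ∈ Om ∧ ‖y - x‖ < δ ∧ y ∈ D})}

/-- `f`, defined on `D ⊆ Ω`, is locally bounded relative to `Ω`. -/
def LocBddOn {n : ℕ} (Om D : Set (Pt n)) (f : Pt n → ℝ) : Prop :=
  ∀ x ∈ Om, ∃ δ : ℝ, 0 < δ ∧ ∃ M : ℝ,
    ∀ y, y ∈ Om → ‖y - x‖ < δ → y ∈ D → |f y| < M

/-- `(u, v)` encodes an interval-valued function `x ↦ [u x, v x]` on `Om`. -/
def IntervalPair {n : ℕ} (Om : Set (Pt n)) (u v : Pt n → ℝ) : Prop :=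
  LocBddOn Om Om u ∧ LocBddOn Om Om v ∧ ∀ x ∈ Om, u x ≤ v x

/-- The pair `(u, v)` is S-continuous on `Om`: `I(u) = u` and `S(v) = v`. -/
def SCont {n : ℕ} (Om : Set (Pt n)) (u v : Pt n → ℝ) : Prop :=
  ∀ x ∈ Om, Ilow Om Om u x = u x ∧ Shigh Om Om v x = v x

/-- The pair `(u, v)` is Hausdorff continuous on `Om`. -/
def HCont {n : ℕ} (Om : Set (Pt n)) (u v : Pt n → ℝ) : Prop :=
  ∀ p q : Pt n → ℝ, LocBddOn Om Om p → LocBddOn Om Om q →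
    (∀ x ∈ Om, u x ≤ p x ∧ p x ≤ q x ∧ q x ≤ v x) →
    ∀ x ∈ Om, Ilow Om Om p x = u x ∧ Shigh Om Om q x = v x

/-- `(u, v)` is an H-continuous interval pair on `Om`. -/
def HContPair {n : ℕ} (Om : Set (Pt n)) (u v : Pt n → ℝ) : Prop :=
  IntervalPair Om u v ∧ HCont Om u v

/-- Lower endpoint of the pointwise interval product. -/
noncomputable def imin {n : ℕ} (u₁ v₁ u₂ v₂ : Pt n → ℝ) (x : Pt n) : ℝ :=
  min (min (u₁ x * u₂ x) (u₁ x * v₂ x)) (min (v₁ x * u₂ x) (v₁ x * v₂ x))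

/-- Upper endpoint of the pointwise interval product. -/
noncomputable def imax {n : ℕ} (u₁ v₁ u₂ v₂ : Pt n → ℝ) (x : Pt n) : ℝ :=
  max (max (u₁ x * u₂ x) (u₁ x * v₂ x)) (max (v₁ x * u₂ x) (v₁ x * v₂ x))

/-- `(pl, pu)` is the H-continuous pair contained pointwise in the interval sum of
`(u₁, v₁)` and `(u₂, v₂)`, i.e. `(pl, pu) = (u₁,v₁) ⊕ (u₂,v₂)`. -/
def IsOplus {n : ℕ} (Om : Set (Pt n)) (u₁ v₁ u₂ v₂ pl pu : Pt n → ℝ) : Prop :=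
  HContPair Om pl pu ∧
    ∀ x ∈ Om, u₁ x + u₂ x ≤ pl x ∧ pl x ≤ pu x ∧ pu x ≤ v₁ x + v₂ x

/-- `(ql, qu)` is the H-continuous pair contained pointwise in the interval product of
`(u₁, v₁)` and `(u₂, v₂)`, i.e. `(ql, qu) = (u₁,v₁) ⊗ (u₂,v₂)`. -/
def IsOtimes {n : ℕ} (Om : Set (Pt n)) (u₁ v₁ u₂ v₂ ql qu : Pt n → ℝ) : Prop :=
  HContPair Om ql qu ∧
    ∀ x ∈ Om, imin u₁ v₁ u₂ v₂ x ≤ ql x ∧ ql x ≤ qu x ∧ qu x ≤ imax u₁ v₁ u₂ v₂ x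

def BBel {n : ℕ} (D : Set (Pt n)) (f : Pt n → ℝ) : Prop :=
  ∀ R : ℝ, ∃ m : ℝ, ∀ y ∈ D, ‖y‖ < R → m ≤ f y

lemma Ilow_neg {n : ℕ} (D Om : Set (Pt n)) (f : Pt n → ℝ) (x : Pt n) :
    Ilow D Om (-f) x = - Shigh D Om f x := by
  unfold Ilow Shigh
  rw [Real.sInf_def, neg_neg]
  congr 1
  ext a
  simp only [Set.mem_setOf_eq, Set.mem_neg]
  have key : ∀ s : Set (Pt n), sInf ((-f) '' s) = - sSup (f '' s) := by
    intro s
    rw [Real.sInf_def]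
    congr 2
    ext b
    simp [Set.mem_neg]
  constructor
  · rintro ⟨δ, h, e⟩
    exact ⟨δ, h, by rw [e, key, neg_neg]⟩
  · rintro ⟨δ, h, e⟩
    exact ⟨δ, h, by rw [key, ← e, neg_neg]⟩

lemma Shigh_neg {n : ℕ} (D Om : Set (Pt n)) (f : Pt n → ℝ) (x : Pt n) :
    Shigh D Om (-f) x = - Ilow D Om f x := by
  have := Ilow_neg D Om (-f) x
  rw [neg_neg] at this
  rw [this, neg_neg]

lemma LocBddOn.neg' {n : ℕ} {Om D : Set (Pt n)} {f : Pt n → ℝ} (h : LocBddOn Om D f) :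
    LocBddOn Om D (-f) := by
  intro x hx
  obtain ⟨δ, h0, M, hM⟩ := h x hx
  exact ⟨δ, h0, M, fun y a b c => by simpa using hM y a b c⟩

lemma HContPair.neg' {n : ℕ} {Om : Set (Pt n)} {u v : Pt n → ℝ} (h : HContPair Om u v) :
    HContPair Om (-v) (-u) := by
  obtain ⟨⟨h1, h2, h3⟩, h4⟩ := h
  refine ⟨⟨h2.neg', h1.neg', fun x hx => by simpa using h3 x hx⟩, ?_⟩
  intro p q hp hq hpq x hx
  have := h4 (-q) (-p) hq.neg' hp.neg' (fun y hy => by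
    have := hpq y hy
    simp only [Pi.neg_apply] at *
    refine ⟨?_, ?_, ?_⟩ <;> linarith) x hx
  rw [Ilow_neg, Shigh_neg] at this
  simp only [Pi.neg_apply]
  constructor <;> linarith

lemma near {n : ℕ} {Om D : Set (Pt n)} (hdense : Om ⊆ closure D) {x : Pt n} (hx : x ∈ Om)
    {δ : ℝ} (hδ : 0 < δ) : ∃ y ∈ D, ‖y - x‖ < δ := by
  obtain ⟨y, hy, h⟩ := Metric.mem_closure_iff.1 (hdense hx) δ hδ
  exact ⟨y, hy, by rwa [dist_comm, dist_eq_norm] at h⟩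

lemma Ibdd {n : ℕ} {Om D : Set (Pt n)} (hD : D ⊆ Om) (hdense : Om ⊆ closure D)
    {f : Pt n → ℝ} (hf : LocBddOn Om D f) {x : Pt n} (hx : x ∈ Om) :
    BddAbove {a : ℝ | ∃ δ : ℝ, 0 < δ ∧
      a = sInf (f '' {y | y ∈ Om ∧ ‖y - x‖ < δ ∧ y ∈ D})} := by
  obtain ⟨δ₀, h0, M, hM⟩ := hf x hx
  refine ⟨M, ?_⟩
  rintro a ⟨δ, hδ, rfl⟩
  obtain ⟨y, hy, hyx⟩ := near hdense hx (lt_min h0 hδ)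
  have hy1 := hM y (hD hy) (hyx.trans_le (min_le_left _ _)) hy
  by_cases hb : BddBelow (f '' {y | y ∈ Om ∧ ‖y - x‖ < δ ∧ y ∈ D})
  · exact (csInf_le hb ⟨y, ⟨hD hy, hyx.trans_le (min_le_right _ _), hy⟩, rfl⟩).trans
      ((le_abs_self _).trans hy1.le)
  · rw [Real.sInf_of_not_bddBelow hb]
    exact (abs_nonneg _).trans hy1.le

lemma I_lt {n : ℕ} {Om D : Set (Pt n)} (hD : D ⊆ Om)
    {f : Pt n → ℝ} (hf : BBel D f) {x : Pt n} {c : ℝ}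
    (h : c < Ilow D Om f x) : ∃ δ > 0, ∀ y ∈ D, ‖y - x‖ < δ → c < f y := by
  obtain ⟨a, ⟨δ, hδ, rfl⟩, hc⟩ := exists_lt_of_lt_csSup (by exact ⟨_, 1, one_pos, rfl⟩) (show c < sSup _ from h)
  refine ⟨δ, hδ, fun y hy hyx => hc.trans_le (csInf_le ?_ ⟨y, ⟨hD hy, hyx, hy⟩, rfl⟩)⟩
  obtain ⟨m, hm⟩ := hf (δ + ‖x‖)
  refine ⟨m, ?_⟩
  rintro _ ⟨z, ⟨_, hz, hzD⟩, rfl⟩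
  refine hm z hzD ?_
  have := norm_add_le (z - x) x
  rw [sub_add_cancel] at this
  linarith

lemma le_I {n : ℕ} {Om D : Set (Pt n)} (hD : D ⊆ Om) (hdense : Om ⊆ closure D)
    {f : Pt n → ℝ} (hf : LocBddOn Om D f) {x : Pt n} (hx : x ∈ Om) {c δ : ℝ} (hδ : 0 < δ)
    (h : ∀ y ∈ D, ‖y - x‖ < δ → c ≤ f y) : c ≤ Ilow D Om f x := by
  refine le_csSup_of_le (Ibdd hD hdense hf hx) ⟨δ, hδ, rfl⟩ (le_csInf ?_ ?_)
  · obtain ⟨y, hy, hyx⟩ := near hdense hx hδ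
    exact ⟨_, y, ⟨hD hy, hyx, hy⟩, rfl⟩
  · rintro _ ⟨z, ⟨_, hz, hzD⟩, rfl⟩
    exact h z hzD hz

lemma HContPair.self {n : ℕ} {Om : Set (Pt n)} {u v : Pt n → ℝ} (h : HContPair Om u v) :
    ∀ x ∈ Om, Ilow Om Om u x = u x ∧ Shigh Om Om v x = v x :=
  h.2 u v h.1.1 h.1.2.1 fun x hx => ⟨le_rfl, h.1.2.2 x hx, le_rfl⟩

lemma HContPair.bbel {n : ℕ} {Om : Set (Pt n)} {u v : Pt n → ℝ} (h : HContPair Om u v) :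
    BBel Om u := by
  intro R
  by_contra! hR
  obtain ⟨x, hx, -, hneg⟩ := hR 0
  have h1 := (h.self x hx).1
  have : 0 ≤ Ilow Om Om u x := by
    refine le_csSup (Ibdd subset_rfl subset_closure h.1.1 hx) ⟨|R| + ‖x‖ + 1, by positivity, ?_⟩
    rw [Real.sInf_of_not_bddBelow]
    rintro ⟨m, hm⟩
    obtain ⟨y, hy, hyR, hym⟩ := hR m
    refine absurd (hm ⟨y, ⟨hy, ?_, hy⟩, rfl⟩) (not_le.2 hym)
    have := norm_sub_le y x
    have := le_abs_self R
    linarith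
  linarith

lemma I_le_of_le {n : ℕ} {Om D : Set (Pt n)} (hD : D ⊆ Om) (hdense : Om ⊆ closure D)
    {f : Pt n → ℝ} (hf : LocBddOn Om D f) {x : Pt n} (hx : x ∈ Om) {M δ : ℝ} (hδ : 0 < δ)
    (hb : BBel D f) (h : ∀ y ∈ D, ‖y - x‖ < δ → f y ≤ M) : Ilow D Om f x ≤ M := by
  by_contra! hc
  obtain ⟨δ', h', hh⟩ := I_lt hD hb hc
  obtain ⟨y, hy, hyx⟩ := near hdense hx (lt_min hδ h')
  have := h y hy (hyx.trans_le (min_le_left _ _))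
  have := hh y hy (hyx.trans_le (min_le_right _ _))
  linarith

lemma I_locBdd {n : ℕ} {Om D : Set (Pt n)} (hD : D ⊆ Om) (hdense : Om ⊆ closure D)
    {f : Pt n → ℝ} (hf : LocBddOn Om D f) (hb : BBel D f) :
    LocBddOn Om Om (Ilow D Om f) := by
  intro x hx
  obtain ⟨δ, h0, M, hM⟩ := hf x hx
  refine ⟨δ / 2, by positivity, M + 1, fun y hy hyx _ => ?_⟩
  have key : ∀ z ∈ D, ‖z - y‖ < δ / 2 → |f z| ≤ M := by
    intro z hz hzy
    refine (hM z (hD hz) ?_ hz).le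
    have := norm_add_le (z - y) (y - x)
    rw [sub_add_sub_cancel] at this
    linarith
  have a1 := le_I hD hdense hf hy (half_pos h0) (fun z hz hzy => (abs_le.1 (key z hz hzy)).1)
  have a2 := I_le_of_le hD hdense hf hy (half_pos h0) hb
    (fun z hz hzy => (abs_le.1 (key z hz hzy)).2)
  rw [abs_lt]
  constructor <;> linarith

lemma I_eq {n : ℕ} {Om D : Set (Pt n)} (hD : D ⊆ Om) (f : Pt n → ℝ) (x : Pt n) :
    Ilow D Om f x = Ilow D D f x := by
  unfold Ilow
  have : ∀ δ : ℝ, {y | y ∈ Om ∧ ‖y - x‖ < δ ∧ y ∈ D} = {y | y ∈ D ∧ ‖y - x‖ < δ ∧ y ∈ D} := by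
    intro δ
    ext y
    exact ⟨fun h => ⟨h.2.2, h.2⟩, fun h => ⟨hD h.1, h.2⟩⟩
  simp only [this]

lemma BBel.mono {n : ℕ} {D : Set (Pt n)} {f g : Pt n → ℝ} (h : BBel D f)
    (hfg : ∀ x ∈ D, f x ≤ g x) : BBel D g := fun R => by
  obtain ⟨m, hm⟩ := h R
  exact ⟨m, fun y hy hR => (hm y hy hR).trans (hfg y hy)⟩

lemma I_bbel {n : ℕ} {Om D : Set (Pt n)} (hD : D ⊆ Om) (hdense : Om ⊆ closure D)
    {f : Pt n → ℝ} (hf : LocBddOn Om D f) (hb : BBel D f) : BBel Om (Ilow D Om f) := by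
  intro R
  obtain ⟨m, hm⟩ := hb R
  refine ⟨m, fun y hy hR => le_I hD hdense hf hy (sub_pos.2 hR) fun z hz hzy => hm z hz ?_⟩
  have := norm_add_le (z - y) y
  rw [sub_add_cancel] at this
  linarith

lemma locBdd_restr {n : ℕ} {Om D : Set (Pt n)} (hD : D ⊆ Om) {f : Pt n → ℝ}
    (hf : LocBddOn Om Om f) : LocBddOn D D f := by
  intro x hx
  obtain ⟨δ, h0, M, hM⟩ := hf x (hD hx)
  exact ⟨δ, h0, M, fun y hy hyx _ => hM y (hD hy) hyx (hD hy)⟩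

lemma half {n : ℕ} (Om D : Set (Pt n)) (hD : D ⊆ Om) (hdense : Om ⊆ closure D)
    (phl phu : Pt n → ℝ) (hbl : LocBddOn Om D phl) (hH : HContPair D phl phu)
    (p : Pt n → ℝ) (hp : LocBddOn Om Om p) (h1 : ∀ x ∈ Om, Ilow D Om phl x ≤ p x)
    (h2 : ∀ x ∈ D, p x ≤ phu x) : ∀ x ∈ Om, Ilow Om Om p x = Ilow D Om phl x := by
  have hb := hH.bbel
  have hbp : BBel Om p := (I_bbel hD hdense hbl hb).mono h1
  have hbpD : ∀ x ∈ D, phl x ≤ p x := fun x hx => by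
    rw [← (hH.self x hx).1, ← I_eq hD]
    exact h1 x (hD hx)
  intro x hx
  apply le_antisymm
  · by_contra! hc
    obtain ⟨c, c1, c2⟩ := exists_between hc
    obtain ⟨δ, hδ, hc⟩ := I_lt subset_rfl hbp c2
    have : ∃ z ∈ D, ‖z - x‖ < δ ∧ phl z < c := by
      by_contra! hh
      exact absurd (le_I hD hdense hbl hx hδ hh) (not_le.2 c1)
    obtain ⟨z, hz, hzx, hzc⟩ := this
    have e := (hH.2 p phu (locBdd_restr hD hp) hH.1.2.1
      (fun y hy => ⟨hbpD y hy, h2 y hy, le_rfl⟩) z hz).1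
    have : c ≤ Ilow D D p z := by
      refine le_I subset_rfl subset_closure (locBdd_restr hD hp) hz (sub_pos.2 hzx) ?_
      intro y hy hyz
      refine (hc y (hD hy) ?_).le
      have := norm_add_le (y - z) (z - x)
      rw [sub_add_sub_cancel] at this
      linarith
    linarith
  · apply le_of_forall_lt
    intro c' hc'
    obtain ⟨c, hc1, hc⟩ := exists_between hc'
    refine hc1.trans_le ?_
    obtain ⟨δ, hδ, hc⟩ := I_lt hD hb hc
    refine le_I subset_rfl subset_closure hp hx hδ fun y hy hyx => ?_
    refine le_trans ?_ (h1 y hy)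
    refine le_I hD hdense hbl hy (sub_pos.2 hyx) fun z hz hzy => (hc z hz ?_).le
    have := norm_add_le (z - y) (y - x)
    rw [sub_add_sub_cancel] at this
    linarith

lemma uniq_half {n : ℕ} (Om D : Set (Pt n)) (hD : D ⊆ Om) (hdense : Om ⊆ closure D)
    (phl : Pt n → ℝ) (hbl : LocBddOn Om D phl)
    (u v : Pt n → ℝ) (h : HContPair Om u v) (hu : ∀ x ∈ D, u x = phl x) :
    ∀ x ∈ Om, u x ≤ Ilow D Om phl x := by
  intro x hx
  apply le_of_forall_lt
  intro c' hc'
  obtain ⟨c, hc1, hc⟩ := exists_between hc'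
  refine hc1.trans_le ?_
  rw [← (h.self x hx).1] at hc
  obtain ⟨δ, hδ, hc⟩ := I_lt subset_rfl h.bbel hc
  exact le_I hD hdense hbl hx hδ fun y hy hyx => hu y hy ▸ (hc y (hD hy) hyx).le

theorem stmt15 {n : ℕ} (Om D : Set (Pt n)) (hD : D ⊆ Om) (hdense : Om ⊆ closure D)
    (phl phu : Pt n → ℝ)
    (hbl : LocBddOn Om D phl) (hbu : LocBddOn Om D phu)
    (hle : ∀ x ∈ D, phl x ≤ phu x)
    (hH : HContPair D phl phu) :
    (HContPair Om (Ilow D Om phl) (Shigh D Om phu) ∧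
      ∀ x ∈ D, Ilow D Om phl x = phl x ∧ Shigh D Om phu x = phu x) ∧
    ∀ u v : Pt n → ℝ, HContPair Om u v →
      (∀ x ∈ D, u x = phl x ∧ v x = phu x) →
      ∀ x ∈ Om, u x = Ilow D Om phl x ∧ v x = Shigh D Om phu x := by
  have hS : ∀ x, Shigh D Om phu x = - Ilow D Om (-phu) x := fun x => by
    rw [Ilow_neg, neg_neg]
  have hS' : Shigh D Om phu = - Ilow D Om (-phu) := funext hS
  have hN := hH.neg'
  have eqD : ∀ x ∈ D, Ilow D Om phl x = phl x ∧ Shigh D Om phu x = phu x := by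
    intro x hx
    rw [hS, I_eq hD, I_eq hD, (hH.self x hx).1, (hN.self x hx).1]
    simp
  have hUV : ∀ x ∈ Om, Ilow D Om phl x ≤ Shigh D Om phu x := by
    intro x hx
    by_contra! hc
    obtain ⟨c, c1, c2⟩ := exists_between hc
    rw [hS] at c1
    obtain ⟨δ, hδ, hc⟩ := I_lt hD hH.bbel c2
    obtain ⟨δ', hδ', hc'⟩ := I_lt hD hN.bbel (show -c < _ by linarith)
    obtain ⟨y, hy, hyx⟩ := near hdense hx (lt_min hδ hδ')
    have a1 := hc y hy (hyx.trans_le (min_le_left _ _))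
    have a2 := hc' y hy (hyx.trans_le (min_le_right _ _))
    have := hle y hy
    simp only [Pi.neg_apply] at a2
    linarith
  have main : HContPair Om (Ilow D Om phl) (Shigh D Om phu) := by
    refine ⟨⟨I_locBdd hD hdense hbl hH.bbel, ?_, hUV⟩, ?_⟩
    · rw [hS']
      exact (I_locBdd hD hdense hbu.neg' hN.bbel).neg'
    · intro p q hp hq hpq x hx
      constructor
      · refine half Om D hD hdense phl phu hbl hH p hp (fun y hy => (hpq y hy).1) ?_ x hx
        intro y hy
        rw [← (eqD y hy).2]
        have := hpq y (hD hy)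
        linarith
      · have := half Om D hD hdense (-phu) (-phl) hbu.neg' hN (-q) hq.neg' ?_ ?_ x hx
        · rw [Ilow_neg] at this
          rw [hS]
          linarith
        · intro y hy
          have := (hpq y hy).2.2
          rw [hS] at this
          simp only [Pi.neg_apply]
          linarith
        · intro y hy
          have := hpq y (hD hy)
          have := (eqD y hy).1
          simp only [Pi.neg_apply]
          linarith
  refine ⟨⟨main, eqD⟩, ?_⟩
  intro u v huv he x hx
  have h1 := uniq_half Om D hD hdense phl hbl u v huv fun y hy => (he y hy).1
  have h2 := uniq_half Om D hD hdense (-phu) hbu.neg' (-v) (-u) huv.neg'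
    fun y hy => by simp [(he y hy).2]
  have a := huv.2 _ _ main.1.1 main.1.2.1 (fun y hy => ⟨h1 y hy, hUV y hy, by
    have := h2 y hy
    rw [hS]
    simp only [Pi.neg_apply] at this
    linarith⟩) x hx
  have b := main.self x hx
  exact ⟨a.1.symm.trans b.1, a.2.symm.trans b.2⟩
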